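/- arXiv:0811.0226 — 5 statements merged into one kernel-verified Lean document; each statement's English description precedes it below -/
import Mathlib

section
/- Let G be a seminormed abelian group, let K be an additive subgroup of G, and let π : G → G/K be the canonical quotient homomorphism. Assume that the set {x ∈ G : ‖x‖ ≤ 2} is finite. Then the cardinality of the image π({x ∈ G : ‖x‖ ≤ 1}) multiplied by the cardinality of {k ∈ K : ‖k‖ ≤ 1} is at most the cardinality of {x ∈ G : ‖x‖ ≤ 2}. -/
/-- Upper bound of Proposition 2.6 (group-theoretic content): in a seminormed
abelian group `G` with subgroup `K`, if the ball of radius 2 is finite, then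
`#(π(ball 1)) * #(ball 1 ∩ K) ≤ #(ball 2)`, where `π : G → G/K`. -/
theorem stmt_0 {G : Type*} [SeminormedAddCommGroup G] (K : AddSubgroup G)
    (hfin : {x : G | ‖x‖ ≤ 2}.Finite) :
    Nat.card ((QuotientAddGroup.mk' K) '' {x : G | ‖x‖ ≤ 1}) *
      Nat.card {k : K | ‖(k : G)‖ ≤ 1} ≤ Nat.card {x : G | ‖x‖ ≤ 2} := by
  rw [← Nat.card_prod]
  have hf : Finite {x : G | ‖x‖ ≤ 2} := hfin
  have hs : ∀ q : ((QuotientAddGroup.mk' K) '' {x : G | ‖x‖ ≤ 1}),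
      ∃ x : G, ‖x‖ ≤ 1 ∧ QuotientAddGroup.mk' K x = q.1 := fun q => q.2
  choose s hs1 hs2 using hs
  refine Nat.card_le_card_of_injective
    (fun p => (⟨s p.1 + (p.2.1 : G), ?_⟩ : {x : G | ‖x‖ ≤ 2})) ?_
  · have h1 := hs1 p.1
    have h2 : ‖(p.2.1 : G)‖ ≤ 1 := p.2.2
    have h3 := norm_add_le (s p.1) (p.2.1 : G)
    show ‖s p.1 + (p.2.1 : G)‖ ≤ 2
    linarith
  · rintro ⟨q, k⟩ ⟨q', k'⟩ h
    have h0 : s q + (k.1 : G) = s q' + (k'.1 : G) := congrArg Subtype.val h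
    have hk : ∀ k : K, QuotientAddGroup.mk' K (k : G) = 0 := fun k =>
      (QuotientAddGroup.eq_zero_iff (k : G)).2 k.2
    have hq : q = q' := by
      apply Subtype.ext
      have := congrArg (QuotientAddGroup.mk' K) h0
      rwa [map_add, map_add, hk, hk, add_zero, add_zero, hs2, hs2] at this
    subst hq
    have hkk : k = k' := Subtype.ext (Subtype.ext (add_left_cancel h0))
    rw [hkk]
end

section
/- Let E be a finite-dimensional real normed vector space and let L ⊆ E be a ℤ-lattice, i.e. a discrete additive subgroup of E that spans E over ℝ. Then for every integer n ≥ 1, the cardinality of {x ∈ L : ‖x‖ ≤ 1} is at most n^(dim_ℝ E) times the cardinality of {x ∈ L : ‖x‖ ≤ 2/n}. -/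
theorem stmt_2_aux {M ι : Type*} [AddCommGroup M] [Fintype ι] (b : Module.Basis ι ℤ M)
    (n : ℕ) (hn : 1 ≤ n) (A B : Set M) [Finite B]
    (h : ∀ x ∈ A, ∀ y ∈ A, ∀ z : M, x - y = n • z → z ∈ B) :
    Nat.card A ≤ n ^ (Fintype.card ι) * Nat.card B := by
  classical
  haveI : NeZero n := ⟨by omega⟩
  let c : M → (ι → ZMod n) := fun x i => ((b.repr x i : ℤ) : ZMod n)
  have hc : ∀ x y : M, c x = c y → ∃ z : M, x - y = n • z := by
    intro x y hxy
    have h1 : ∀ i, ∃ k : ℤ, b.repr x i - b.repr y i = n * k := by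
      intro i
      have := congrFun hxy i
      have h2 := (ZMod.intCast_eq_intCast_iff_dvd_sub _ _ _).1 this.symm
      exact h2
    choose k hk using h1
    refine ⟨b.equivFun.symm k, ?_⟩
    apply b.equivFun.injective
    ext i
    rw [map_sub, map_nsmul, LinearEquiv.apply_symm_apply]
    simpa using hk i
  have hr : ∀ x : A, ∃ y : A, c y = c x := fun x => ⟨x, rfl⟩
  let r : (ι → ZMod n) → M := fun v =>
    if hv : ∃ y : A, c y = v then (hv.choose : M) else 0
  have hr1 : ∀ x : A, r (c x) ∈ A ∧ c (r (c x)) = c x := by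
    intro x
    have hv : ∃ y : A, c y = c x := ⟨x, rfl⟩
    simp only [r, dif_pos hv]
    exact ⟨hv.choose.2, hv.choose_spec⟩
  have hz : ∀ x : A, ∃ z : B, (x : M) - r (c x) = n • (z : M) := by
    intro x
    obtain ⟨z, hz⟩ := hc x (r (c x)) (hr1 x).2.symm
    exact ⟨⟨z, h _ x.2 _ (hr1 x).1 z hz⟩, hz⟩
  choose f hf using hz
  have hinj : Function.Injective (fun x : A => (c x, f x)) := by
    intro x y hxy
    simp only [Prod.mk.injEq] at hxy
    have h1 := hf x
    rw [hxy.1, hxy.2, ← hf y] at h1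
    exact Subtype.ext (sub_left_injective h1)
  have := Nat.card_le_card_of_injective _ hinj
  simpa [Nat.card_prod, Nat.card_fun, Nat.card_pi] using this

/-- Lattice-point counting step in the proof of Lemma 2.7: for a ℤ-lattice `L`
(a discrete additive subgroup spanning `E` over ℝ) in a finite-dimensional real
normed vector space `E` and any integer `n ≥ 1`,
`#{x ∈ L : ‖x‖ ≤ 1} ≤ n^(dim E) * #{x ∈ L : ‖x‖ ≤ 2/n}`. -/
theorem stmt_2 {E : Type*} [NormedAddCommGroup E] [NormedSpace ℝ E]
    [FiniteDimensional ℝ E] (L : AddSubgroup E) (hdisc : DiscreteTopology L)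
    (hspan : Submodule.span ℝ (L : Set E) = ⊤) (n : ℕ) (hn : 1 ≤ n) :
    Nat.card {x : L | ‖(x : E)‖ ≤ 1} ≤
      n ^ (Module.finrank ℝ E) * Nat.card {x : L | ‖(x : E)‖ ≤ 2 / (n : ℝ)} := by
  let L' : Submodule ℤ E := AddSubgroup.toIntSubmodule L
  haveI : DiscreteTopology L' := hdisc
  haveI : IsZLattice ℝ L' := ⟨hspan⟩
  haveI := ZLattice.module_finite ℝ L'
  haveI := ZLattice.module_free ℝ L'
  have hrank := ZLattice.rank ℝ L'
  let b : Module.Basis _ ℤ L' := Module.Free.chooseBasis ℤ L'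
  rw [← hrank, Module.finrank_eq_card_chooseBasisIndex]
  haveI : ProperSpace E := FiniteDimensional.proper ℝ E
  have hfin : {x : L | ‖(x : E)‖ ≤ 2 / (n : ℝ)}.Finite := by
    have h1 : (Metric.closedBall (0:E) (2 / (n:ℝ)) ∩ (L : Set E)).Finite :=
      Metric.finite_isBounded_inter_isClosed (isDiscrete_iff_discreteTopology.2 hdisc)
        Metric.isBounded_closedBall AddSubgroup.isClosed_of_discrete
    refine Set.Finite.of_finite_image (f := Subtype.val) (h1.subset ?_)
      Subtype.val_injective.injOn
    rintro _ ⟨x, hx, rfl⟩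
    exact ⟨by simpa using hx, x.2⟩
  haveI : Finite {x : L | ‖(x : E)‖ ≤ 2 / (n : ℝ)} := hfin
  refine stmt_2_aux (M := L) b n hn _ _ ?_
  intro x hx y hy z hz
  have hn0 : (0:ℝ) < n := by exact_mod_cast hn
  simp only [Set.mem_setOf_eq] at *
  have h1 : (x : E) - y = (n : ℝ) • (z : E) := by
    have := congrArg (Subtype.val) hz
    simpa [Nat.cast_smul_eq_nsmul] using this
  rw [le_div_iff₀ hn0]
  calc ‖(z : E)‖ * n = ‖(n : ℝ) • (z : E)‖ := by
        rw [norm_smul, Real.norm_natCast, mul_comm]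
    _ = ‖(x : E) - y‖ := by rw [h1]
    _ ≤ ‖(x : E)‖ + ‖(y : E)‖ := norm_sub_le _ _
    _ ≤ 2 := by linarith
end

section
/- Let E be a finite-dimensional real normed vector space and let L ⊆ E be a ℤ-lattice, i.e. a discrete additive subgroup of E that spans E over ℝ. Then for every real number α ≥ 0, one has 0 ≤ log #{x ∈ L : ‖x‖ ≤ 1} − log #{x ∈ L : ‖x‖ ≤ e^(−α)} ≤ (α + log 3) · dim_ℝ E, where log denotes the natural logarithm. -/
open MeasureTheory in
theorem aux_count {E : Type*} [NormedAddCommGroup E] [NormedSpace ℝ E]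
    [FiniteDimensional ℝ E] (L : AddSubgroup E) (r : ℝ) (hr : 0 < r)
    (S T : Finset L) (hS : ∀ x : L, x ∈ S ↔ ‖(x : E)‖ ≤ 1)
    (hT : ∀ x : L, x ∈ T ↔ ‖(x : E)‖ ≤ r) :
    (S.card : ℝ) * (r / 2) ^ Module.finrank ℝ E
      ≤ T.card * (1 + r / 2) ^ Module.finrank ℝ E := by
  classical
  letI : MeasurableSpace E := borel E
  haveI : BorelSpace E := ⟨rfl⟩
  let μ : Measure E := Measure.addHaar
  have key : ∑ x ∈ S, μ (Metric.closedBall (x : E) (r / 2))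
      ≤ (T.card : ENNReal) * μ (Metric.closedBall (0 : E) (1 + r / 2)) := by
    calc ∑ x ∈ S, μ (Metric.closedBall (x : E) (r / 2))
        = ∑ x ∈ S, ∫⁻ y, (Metric.closedBall (x : E) (r / 2)).indicator 1 y ∂μ := by
          refine Finset.sum_congr rfl fun x _ => ?_
          rw [lintegral_indicator_one Metric.isClosed_closedBall.measurableSet]
      _ = ∫⁻ y, ∑ x ∈ S, (Metric.closedBall (x : E) (r / 2)).indicator 1 y ∂μ := by
          rw [lintegral_finsetSum]
          intro x _
          exact measurable_one.indicator Metric.isClosed_closedBall.measurableSet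
      _ ≤ ∫⁻ y, (Metric.closedBall (0 : E) (1 + r / 2)).indicator
            (fun _ => (T.card : ENNReal)) y ∂μ := by
          refine lintegral_mono fun y => ?_
          have h1 : ∑ x ∈ S, (Metric.closedBall (x : E) (r / 2)).indicator
              (1 : E → ENNReal) y
              = ((S.filter fun x : L => y ∈ Metric.closedBall (x : E) (r / 2)).card : ENNReal) := by
            simp only [Set.indicator_apply, Pi.one_apply, Finset.sum_boole]
          show ∑ x ∈ S, (Metric.closedBall (x : E) (r / 2)).indicator
              (1 : E → ENNReal) y ≤ _
          rw [h1]
          rcases (S.filter fun x : L => y ∈ Metric.closedBall (x : E) (r / 2)).eq_empty_or_nonempty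
            with h | ⟨x0, h0⟩
          · rw [h]; simp
          · have h0' := Finset.mem_filter.1 h0
            have hx0 := (hS x0).1 h0'.1
            have hy0 := h0'.2
            rw [mem_closedBall_iff_norm] at hy0
            have hy : y ∈ Metric.closedBall (0 : E) (1 + r / 2) := by
              rw [mem_closedBall_zero_iff]
              have := norm_add_le (x0 : E) (y - x0)
              rw [add_sub_cancel] at this
              linarith
            rw [Set.indicator_of_mem hy]
            have : (S.filter fun x : L => y ∈ Metric.closedBall (x : E) (r / 2)).card ≤ T.card := by
              refine Finset.card_le_card_of_injOn (fun x => x - x0) ?_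
                (fun a _ b _ hab => sub_left_injective hab)
              intro x hx
              have hx' := (Finset.mem_filter.1 (Finset.mem_coe.1 hx)).2
              rw [mem_closedBall_iff_norm] at hx'
              refine Finset.mem_coe.2 ((hT _).2 ?_)
              have := norm_sub_le (y - (x0 : E)) (y - x)
              rw [sub_sub_sub_cancel_left] at this
              rw [AddSubgroup.coe_sub]
              linarith
            exact_mod_cast this
      _ = _ := by
          rw [lintegral_indicator_const Metric.isClosed_closedBall.measurableSet]
  have hb0 : μ (Metric.ball (0 : E) 1) ≠ 0 := (Metric.measure_ball_pos μ 0 one_pos).ne'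
  have hbt : μ (Metric.ball (0 : E) 1) ≠ ⊤ := measure_ball_lt_top.ne
  simp only [Measure.addHaar_closedBall μ _ (by positivity : 0 ≤ r / 2),
    Measure.addHaar_closedBall μ _ (by positivity : 0 ≤ 1 + r / 2), Finset.sum_const,
    nsmul_eq_mul, ← mul_assoc] at key
  rw [ENNReal.mul_le_mul_iff_left hb0 hbt, ← ENNReal.ofReal_natCast, ← ENNReal.ofReal_natCast,
    ← ENNReal.ofReal_mul (by positivity), ← ENNReal.ofReal_mul (by positivity),
    ENNReal.ofReal_le_ofReal_iff (by positivity)] at key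
  exact key

theorem aux_finite {E : Type*} [NormedAddCommGroup E] [NormedSpace ℝ E]
    [FiniteDimensional ℝ E] (L : AddSubgroup E) (hdisc : DiscreteTopology L) (r : ℝ) :
    {x : L | ‖(x : E)‖ ≤ r}.Finite := by
  haveI : ProperSpace E := FiniteDimensional.proper ℝ E
  have hc : IsClosed (L : Set E) := AddSubgroup.isClosed_of_discrete
  have hcomp : IsCompact {x : L | ‖(x : E)‖ ≤ r} := by
    have h := hc.isClosedEmbedding_subtypeVal.isCompact_preimage (isCompact_closedBall (0 : E) r)
    have he : {x : L | ‖(x : E)‖ ≤ r} = (fun x : L => (x : E)) ⁻¹' Metric.closedBall (0 : E) r := by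
      ext x
      simp
    rw [he]
    exact h
  exact hcomp.finite_of_discrete

/-- Lemma 2.7 of the paper in lattice form: for a ℤ-lattice `L` (a discrete
additive subgroup spanning `E` over ℝ) in a finite-dimensional real normed
vector space `E` and any real `α ≥ 0`,
`0 ≤ log #{x ∈ L : ‖x‖ ≤ 1} − log #{x ∈ L : ‖x‖ ≤ e^(−α)} ≤ (α + log 3)·dim E`. -/
theorem stmt_3 {E : Type*} [NormedAddCommGroup E] [NormedSpace ℝ E]
    [FiniteDimensional ℝ E] (L : AddSubgroup E) (hdisc : DiscreteTopology L)
    (hspan : Submodule.span ℝ (L : Set E) = ⊤) (α : ℝ) (hα : 0 ≤ α) :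
    0 ≤ Real.log (Nat.card {x : L | ‖(x : E)‖ ≤ 1}) -
        Real.log (Nat.card {x : L | ‖(x : E)‖ ≤ Real.exp (-α)}) ∧
    Real.log (Nat.card {x : L | ‖(x : E)‖ ≤ 1}) -
        Real.log (Nat.card {x : L | ‖(x : E)‖ ≤ Real.exp (-α)}) ≤
      (α + Real.log 3) * (Module.finrank ℝ E) := by
  have hf1 := aux_finite L hdisc 1
  have hfr := aux_finite L hdisc (Real.exp (-α))
  have hr : 0 < Real.exp (-α) := Real.exp_pos _
  have hr1 : Real.exp (-α) ≤ 1 := Real.exp_le_one_iff.2 (by linarith)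
  have key := aux_count L _ hr hf1.toFinset hfr.toFinset (by simp) (by simp)
  rw [← Nat.card_eq_card_finite_toFinset hf1, ← Nat.card_eq_card_finite_toFinset hfr] at key
  have hle : Nat.card {x : L | ‖(x : E)‖ ≤ Real.exp (-α)} ≤ Nat.card {x : L | ‖(x : E)‖ ≤ 1} :=
    Nat.card_mono hf1 fun x hx => le_trans hx hr1
  have hpos : 0 < Nat.card {x : L | ‖(x : E)‖ ≤ Real.exp (-α)} := by
    haveI := hfr.to_subtype
    haveI : Nonempty {x : L | ‖(x : E)‖ ≤ Real.exp (-α)} := ⟨⟨0, by simp [hr.le]⟩⟩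
    exact Nat.card_pos
  generalize Nat.card {x : L | ‖(x : E)‖ ≤ Real.exp (-α)} = m at *
  generalize Nat.card {x : L | ‖(x : E)‖ ≤ 1} = n at *
  generalize Module.finrank ℝ E = d at *
  have hm : (0 : ℝ) < m := by exact_mod_cast hpos
  have hmn : (m : ℝ) ≤ n := by exact_mod_cast hle
  have hn : (0 : ℝ) < n := hm.trans_le hmn
  refine ⟨sub_nonneg.2 (Real.log_le_log hm hmn), ?_⟩
  have k2 : (n : ℝ) * (Real.exp (-α) / 2) ^ d ≤ m * (3 / 2) ^ d := by
    refine key.trans ?_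
    gcongr
    linarith
  have k3 := Real.log_le_log (by positivity) k2
  rw [Real.log_mul (by positivity) (by positivity), Real.log_mul (by positivity) (by positivity),
    Real.log_pow, Real.log_pow, Real.log_div (by positivity) (by positivity),
    Real.log_div (by positivity) (by positivity), Real.log_exp] at k3
  linarith
end

section
/- Let V be a real vector space, let d ≥ 1 be an integer, and let B be a symmetric d-multilinear form on V with values in ℝ. Let x, y ∈ V satisfy B(x^d) ≥ 0 and B(y^d) ≥ 0, and suppose that for every real number t > 0 one has B((x + t y)^d) ≥ ((B(x^d))^(1/d) + t (B(y^d))^(1/d))^d. Then B(x^(d−1) y) ≥ (B(x^d))^((d−1)/d) · (B(y^d))^(1/d). -/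
/-- First inequality of Corollary 3.1 (multilinear-algebra content): if `B` is a
symmetric `d`-multilinear form with `B(x^d) ≥ 0`, `B(y^d) ≥ 0`, and
`B((x+ty)^d) ≥ (B(x^d)^(1/d) + t·B(y^d)^(1/d))^d` for all `t > 0`, then
`B(x^(d-1)y) ≥ B(x^d)^((d-1)/d) · B(y^d)^(1/d)`. -/
theorem stmt_4 {V : Type*} [AddCommGroup V] [Module ℝ V] (d : ℕ) (hd : 1 ≤ d)
    (B : MultilinearMap ℝ (fun _ : Fin d => V) ℝ)
    (hsym : ∀ (v : Fin d → V) (σ : Equiv.Perm (Fin d)), B (v ∘ σ) = B v)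
    (x y : V)
    (hx : 0 ≤ B (fun _ => x)) (hy : 0 ≤ B (fun _ => y))
    (hineq : ∀ t : ℝ, 0 < t →
      ((B (fun _ => x)) ^ ((1 : ℝ) / d) + t * (B (fun _ => y)) ^ ((1 : ℝ) / d)) ^ d ≤
        B (fun _ => x + t • y)) :
    (B (fun _ => x)) ^ (((d : ℝ) - 1) / d) * (B (fun _ => y)) ^ ((1 : ℝ) / d) ≤
      B (fun i => if (i : ℕ) < d - 1 then x else y) := by
  have hd0 : (d : ℝ) ≠ 0 := by positivity
  have hdpos : (0 : ℝ) < d := by positivity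
  set C := B (fun i => if (i : ℕ) < d - 1 then x else y) with hC
  set a := (B (fun _ => x)) ^ ((1 : ℝ) / d) with ha
  set b := (B (fun _ => y)) ^ ((1 : ℝ) / d) with hb
  have hone : ∀ i : Fin d, B (({i} : Finset (Fin d)).piecewise (fun _ => y) (fun _ => x)) = C := by
    intro i
    have hlast : d - 1 < d := by omega
    rw [hC, ← hsym _ (Equiv.swap i ⟨d - 1, hlast⟩)]
    congr 1
    funext j
    have e1 : ∀ k : Fin d, ((k : ℕ) < d - 1) ↔ k ≠ ⟨d - 1, hlast⟩ := by
      intro k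
      have := k.2
      rw [Ne, Fin.ext_iff]
      simp only
      omega
    simp only [Finset.piecewise, Finset.mem_singleton, Function.comp, e1]
    by_cases h1 : j = i
    · subst h1
      simp [Equiv.swap_apply_def]
      grind
    · simp [Equiv.swap_apply_def]
      grind
  have hexp : ∀ t : ℝ, B (fun _ => x + t • y) =
      ∑ s : Finset (Fin d), t ^ s.card * B (s.piecewise (fun _ => y) (fun _ => x)) := by
    intro t
    have h := B.map_add_univ (fun _ => t • y) (fun _ => x)
    have h0 : (fun _ : Fin d => x + t • y) = (fun _ => t • y) + (fun _ => x) := by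
      funext i
      simp [add_comm]
    rw [h0, h]
    refine Finset.sum_congr rfl fun s _ => ?_
    have h2 := B.map_piecewise_smul (fun _ => t) (s.piecewise (fun _ => y) (fun _ => x)) s
    rw [Finset.prod_const, smul_eq_mul] at h2
    rw [← h2]
    congr 1
    funext j
    by_cases hj : j ∈ s <;> simp [hj]
  have hF : HasDerivAt (fun t : ℝ => B (fun _ => x + t • y)) (d * C) 0 := by
    simp_rw [hexp]
    have h : HasDerivAt (fun t : ℝ => ∑ s : Finset (Fin d),
        t ^ s.card * B (s.piecewise (fun _ => y) (fun _ => x)))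
        (∑ s : Finset (Fin d), ((s.card : ℝ) * 0 ^ (s.card - 1)) *
          B (s.piecewise (fun _ => y) (fun _ => x))) 0 :=
      HasDerivAt.fun_sum fun s _ => (hasDerivAt_pow s.card (0 : ℝ)).mul_const _
    convert h using 1
    have h3 : ∀ s : Finset (Fin d), ((s.card : ℝ) * 0 ^ (s.card - 1)) *
          B (s.piecewise (fun _ => y) (fun _ => x)) = if s.card = 1 then C else 0 := by
      intro s
      split_ifs with hs
      · obtain ⟨i, rfl⟩ := Finset.card_eq_one.1 hs
        simp [hone]
      · rcases Nat.eq_zero_or_pos s.card with h0 | h0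
        · simp [h0]
        · rw [zero_pow (by omega)]
          simp
    simp_rw [h3]
    rw [← Finset.sum_filter, Finset.sum_const, Finset.univ_filter_card_eq,
      Finset.card_powersetCard]
    simp
  have hG : HasDerivAt (fun t : ℝ => (a + t * b) ^ d) (d * (a ^ (d - 1) * b)) 0 := by
    have h := (((hasDerivAt_id (0 : ℝ)).mul_const b).const_add a).pow d
    refine HasDerivAt.congr_deriv (f := fun t : ℝ => (a + t * b) ^ d) h ?_
    simp [mul_assoc]
  have had : a ^ d = B (fun _ => x) := by
    rw [ha, ← Real.rpow_natCast, ← Real.rpow_mul hx, one_div_mul_cancel hd0, Real.rpow_one]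
  have hkey : 0 ≤ d * C - d * (a ^ (d - 1) * b) := by
    have h := (hF.sub hG).hasDerivWithinAt (s := Set.Ioi 0)
    rw [hasDerivWithinAt_iff_tendsto_slope' (by simp)] at h
    refine ge_of_tendsto h ?_
    filter_upwards [self_mem_nhdsWithin] with t ht
    have ht' : (0 : ℝ) < t := ht
    rw [slope_def_field]
    have := hineq t ht'
    apply div_nonneg
    · simp [had]
      linarith
    · linarith
  have hpow : (B (fun _ => x)) ^ (((d : ℝ) - 1) / d) = a ^ (d - 1) := by
    rw [ha, ← Real.rpow_natCast, ← Real.rpow_mul hx, Nat.cast_sub hd]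
    congr 1
    push_cast
    ring
  rw [hpow]
  rw [← mul_sub] at hkey
  have := nonneg_of_mul_nonneg_right hkey hdpos
  linarith
end

section
/- Let V be a real vector space, let d ≥ 2 be an integer, and let B be a symmetric d-multilinear form on V with values in ℝ. Let x, y ∈ V satisfy B(x^d) > 0, and suppose there exists ε > 0 such that for every real number t with 0 < t < ε one has (B(x^d) + t · B(x^(d−1) y))^d ≥ (B(x^d))^(d−1) · B((x + t y)^d). Then (B(x^(d−1) y))^2 ≥ B(x^d) · B(x^(d−2) y^2). -/
theorem aux_sym {V : Type*} [AddCommGroup V] [Module ℝ V] (d : ℕ)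
    (B : MultilinearMap ℝ (fun _ : Fin d => V) ℝ)
    (hsym : ∀ (v : Fin d → V) (σ : Equiv.Perm (Fin d)), B (v ∘ σ) = B v)
    (x y : V) (s : Finset (Fin d)) :
    B (s.piecewise (fun _ => y) (fun _ => x)) =
      B (fun i => if (i : ℕ) < d - s.card then x else y) := by
  classical
  have hle : s.card ≤ d := by simpa using s.card_le_univ
  have hc : Fintype.card {i : Fin d // ¬ (i : ℕ) < d - s.card} = Fintype.card {i : Fin d // i ∈ s} := by
    rw [Fintype.card_subtype_compl, Fintype.card_coe, Fintype.card_fin, Fintype.card_subtype,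
      Fin.card_filter_val_lt]
    omega
  let e := Fintype.equivOfCardEq hc
  rw [← hsym _ e.extendSubtype]
  congr 1
  funext i
  by_cases h : (i : ℕ) < d - s.card
  · have := e.extendSubtype_not_mem i (not_not.mpr h)
    simp [Finset.piecewise, h, this]
  · have := e.extendSubtype_mem i h
    simp [Finset.piecewise, h, this]

theorem aux_expand {V : Type*} [AddCommGroup V] [Module ℝ V] (d : ℕ)
    (B : MultilinearMap ℝ (fun _ : Fin d => V) ℝ)
    (hsym : ∀ (v : Fin d → V) (σ : Equiv.Perm (Fin d)), B (v ∘ σ) = B v)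
    (x y : V) (t : ℝ) :
    B (fun _ => x + t • y) = ∑ k ∈ Finset.range (d + 1),
      (d.choose k : ℝ) * (t ^ k * B (fun i => if (i : ℕ) < d - k then x else y)) := by
  classical
  have h1 : (fun _ : Fin d => x + t • y) = (fun _ => t • y) + (fun _ => x) := by
    funext i; simp [add_comm]
  rw [h1, B.map_add_univ]
  have h2 : ∀ s : Finset (Fin d), B (s.piecewise (fun _ => t • y) (fun _ => x)) =
      t ^ s.card * B (fun i => if (i : ℕ) < d - s.card then x else y) := by
    intro s
    rw [← aux_sym d B hsym x y s]
    have := B.map_piecewise_smul (fun _ => t) (s.piecewise (fun _ => y) (fun _ => x)) s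
    rw [Finset.prod_const, smul_eq_mul] at this
    rw [← this]
    congr 1
    funext i
    by_cases h : i ∈ s <;> simp [h]
  simp_rw [h2]
  have := Finset.sum_powerset_apply_card
    (fun k => t ^ k * B (fun i => if (i : ℕ) < d - k then x else y)) (x := (Finset.univ : Finset (Fin d)))
  simpa using this

/-- Second inequality of Corollary 3.1 (multilinear-algebra content): if `B` is a
symmetric `d`-multilinear form with `B(x^d) > 0` and
`(B(x^d) + t·B(x^(d-1)y))^d ≥ B(x^d)^(d-1) · B((x+ty)^d)` for all sufficiently
small `t > 0`, then `(B(x^(d-1)y))^2 ≥ B(x^d) · B(x^(d-2)y^2)`. -/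
theorem stmt_5 {V : Type*} [AddCommGroup V] [Module ℝ V] (d : ℕ) (hd : 2 ≤ d)
    (B : MultilinearMap ℝ (fun _ : Fin d => V) ℝ)
    (hsym : ∀ (v : Fin d → V) (σ : Equiv.Perm (Fin d)), B (v ∘ σ) = B v)
    (x y : V)
    (hx : 0 < B (fun _ => x))
    (hineq : ∃ ε : ℝ, 0 < ε ∧ ∀ t : ℝ, 0 < t → t < ε →
      (B (fun _ => x)) ^ (d - 1) * B (fun _ => x + t • y) ≤
        (B (fun _ => x) + t * B (fun i => if (i : ℕ) < d - 1 then x else y)) ^ d) :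
    B (fun _ => x) * B (fun i => if (i : ℕ) < d - 2 then x else y) ≤
      (B (fun i => if (i : ℕ) < d - 1 then x else y)) ^ 2 := by
  obtain ⟨ε, hε, H⟩ := hineq
  obtain ⟨n, rfl⟩ : ∃ n, d = n + 2 := ⟨d - 2, by omega⟩
  have hE := aux_expand (n + 2) B hsym x y
  obtain ⟨b, hb⟩ : ∃ b : ℕ → ℝ, ∀ k, B (fun i => if (i : ℕ) < n + 2 - k then x else y) = b k :=
    ⟨_, fun _ => rfl⟩
  have hb0 : B (fun _ => x) = b 0 := by
    rw [← hb 0]; congr 1; funext i; simp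
  simp only [hb, hb0] at *
  let Q : ℝ → ℝ := fun t => ∑ k ∈ Finset.range (n + 1), ((n + 2).choose (k + 2) : ℝ) *
    (t ^ k * (b 0 ^ (n - k) * b 1 ^ (k + 2) - b 0 ^ (n + 1) * b (k + 2)))
  have hQ : ∀ t, 0 < t → t < ε → 0 ≤ Q t := by
    intro t h0 h1
    have h := H t h0 h1
    rw [hE, add_comm (b 0), add_pow, Finset.mul_sum, ← sub_nonneg, ← Finset.sum_sub_distrib,
      Finset.sum_range_succ', Finset.sum_range_succ'] at h
    have h2 : 0 ≤ t ^ 2 * Q t := by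
      refine h.trans_eq ?_
      simp only [Q, Finset.mul_sum]
      have : ∀ u v w : ℝ, v = 0 → w = 0 → u + v + w = u := by intros; simp [*]
      rw [this]
      · refine Finset.sum_congr rfl fun k hk => ?_
        rw [show n + 2 - (k + 1 + 1) = n - k by omega, show n + 2 - 1 = n + 1 by omega]
        ring
      · rw [show n + 2 - (0 + 1) = n + 1 by omega]
        simp; ring
      · rw [show n + 2 - 1 = n + 1 by omega]
        simp; ring
    exact nonneg_of_mul_nonneg_right h2 (by positivity)
  have hcont : Continuous Q := by fun_prop
  have h0 : 0 ≤ Q 0 := by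
    refine ge_of_tendsto (hcont.continuousWithinAt (s := Set.Ioi 0) (x := 0)) ?_
    filter_upwards [Ioo_mem_nhdsGT hε] with t ht using hQ t ht.1 ht.2
  have h3 : Q 0 = ((n + 2).choose 2 : ℝ) * (b 0 ^ n * (b 1 ^ 2 - b 0 * b 2)) := by
    simp only [Q]
    rw [Finset.sum_range_succ']
    simp
    left; ring
  rw [h3] at h0
  have h4 : (0 : ℝ) < ((n + 2).choose 2 : ℝ) := by
    exact_mod_cast Nat.choose_pos (by omega)
  have h5 := nonneg_of_mul_nonneg_right h0 h4
  have h6 := nonneg_of_mul_nonneg_right h5 (by positivity)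
  linarith
end
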